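/- With the notation below, suppose b_0+b_2 ≢ b_1+b_3 (mod 2), b_0b_2+b_1b_3 ≡ 0 (mod 2), and ββ̄ ≡ −3 (mod 8). Then: (1) if b_0b_2+b_1b_3 ≡ c_0c_2+c_1c_3 (mod 4), then D_4(b)·D_4(c) = (8j+1)(8k−3)(8l−3) for some integers j, k and some prime 8l−3 ∈ P with j ≢ k+l (mod 2); (2) if b_0b_2+b_1b_3 ≢ c_0c_2+c_1c_3 (mod 4), then D_4(b)·D_4(c) = (8j+1)(8k−3)(8l−3) for some integers j, k and some prime 8l−3 ∈ P with j ≡ k+l (mod 2). -/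

import Mathlib

open Matrix Complex

def D4 (x0 x1 x2 x3 : ℤ) : ℤ :=
  (Matrix.of ![![x0, x1, x2, x3], ![x3, x0, x1, x2], ![x2, x3, x0, x1], ![x1, x2, x3, x0]]).det

def Pset : Set ℤ := {p : ℤ | Prime p ∧ 0 < p ∧ p ≡ -3 [ZMOD 8]}

def bI (a : ℕ → ℤ) (i : ℕ) : ℤ := (a i + a (i + 8)) + (a (i + 4) + a (i + 12))

def cI (a : ℕ → ℤ) (i : ℕ) : ℤ := (a i + a (i + 8)) - (a (i + 4) + a (i + 12))

def dd (a : ℕ → ℤ) (i : ℕ) : ℤ := a i - a (i + 8)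

noncomputable def alphaD (d : ℕ → ℤ) (i : ℕ) : ℂ := (d i : ℂ) + Complex.I * (d (i + 4) : ℂ)

noncomputable def betaD (d : ℕ → ℤ) : ℂ :=
  (alphaD d 0 + alphaD d 2) ^ 2 - (alphaD d 1 + alphaD d 3) ^ 2

noncomputable def gammaD (d : ℕ → ℤ) : ℂ :=
  (alphaD d 0 - alphaD d 2) ^ 2 + (alphaD d 1 - alphaD d 3) ^ 2

/-!
Put `sᵢ = aᵢ + aᵢ₊₈` and `tᵢ = aᵢ₊₄ + aᵢ₊₁₂`, so that `b = s + t` and `c = s - t`. A circulant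
determinant splits over `ℤ` as
`D₄(x) = ((x₀ + x₂)² - (x₁ + x₃)²) ((x₀ - x₂)² + (x₁ - x₃)²)`.

* The sums of two squares in `D₄(s + t)` and `D₄(s - t)` are both `1` modulo `4`. They differ by
  four times an integer which has the parity of `Re ((α₀ + α₂) (ᾱ₁ + ᾱ₃))`, and `|β|² ≡ -3` modulo
  `8` makes that real part odd. So one of the two is `5` modulo `8`, and a sum of two squares which
  is `5` modulo `8` has a prime factor `p ≡ 5` modulo `8`.
* With `q(x) = x₀x₂ + x₁x₃`, if `x₀ + x₁ + x₂ + x₃` is odd then `D₄(x) ≡ ±(1 - 4 q(x))` modulo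
  `16`, the sign being given by the parity of `x₀ + x₂`. Hence `D₄(b) D₄(c) ≡ 1 - 4 (q(b) + q(c))`,
  where `q(b) + q(c)` is even. The cofactor of `p` is therefore `-3` modulo `8`, and comparing with
  `(8k - 3) (8l - 3) ≡ 9 + 8 (k + l)` shows that `k + l` is odd exactly when `4 ∣ q(b) + q(c)`.

The factor `8j + 1` can always be taken to be `1`.
-/

theorem sq_modEq_one_of_odd {n : ℤ} (hn : Odd n) : n ^ 2 ≡ 1 [ZMOD 8] :=
  (Int.modEq_iff_dvd.2 (Int.eight_dvd_sq_sub_one_of_odd hn)).symm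

theorem sq_add_sq_modEq_one_of_odd_add {x y : ℤ} (h : Odd (x + y)) :
    x ^ 2 + y ^ 2 ≡ 1 [ZMOD 4] := by
  have hxy : Even (x * y) := by grind
  obtain ⟨m, hm⟩ := hxy
  calc x ^ 2 + y ^ 2 = (x + y) ^ 2 - 4 * m := by linear_combination -2 * hm
    _ ≡ 1 - 0 [ZMOD 4] :=
      ((sq_modEq_one_of_odd h).of_dvd (by norm_num)).sub
        (Int.modEq_zero_iff_dvd.2 (dvd_mul_right 4 m))

theorem sq_add_sq_modEq_five_or {x y z w : ℤ} (hodd : Odd (x + y + (z + w)))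
    (hxz : Odd (x * z + y * w)) :
    (x + y) ^ 2 + (z + w) ^ 2 ≡ 5 [ZMOD 8] ∨ (x - y) ^ 2 + (z - w) ^ 2 ≡ 5 [ZMOD 8] := by
  have hprod : Even ((x + w) * (y + z)) := by grind
  have hxy : Odd (x * y + z * w) := by
    have hsplit : x * y + z * w = (x + w) * (y + z) - (x * z + y * w) := by ring
    exact hsplit ▸ hprod.sub_odd hxz
  obtain ⟨m, hm⟩ := hxy
  have hdiff : (x + y) ^ 2 + (z + w) ^ 2 = (x - y) ^ 2 + (z - w) ^ 2 + (8 * m + 4) := by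
    linear_combination 4 * hm
  have hone : (x + y) ^ 2 + (z + w) ^ 2 ≡ 1 [ZMOD 4] := sq_add_sq_modEq_one_of_odd_add hodd
  unfold Int.ModEq at *
  omega

theorem modEq_one_of_forall_prime_dvd {m n : ℕ} (hn : n ≠ 0)
    (h : ∀ p : ℕ, p.Prime → p ∣ n → p ≡ 1 [MOD m]) : n ≡ 1 [MOD m] := by
  rw [← Nat.prod_primeFactorsList hn]
  exact List.prod_induction (· ≡ 1 [MOD m]) (fun _ _ hx hy ↦ hx.mul hy) Nat.ModEq.rfl
    fun p hp ↦ h p (Nat.prime_of_mem_primeFactorsList hp) (Nat.dvd_of_mem_primeFactorsList hp)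

theorem exists_prime_modEq_five_dvd_sq_add_sq {x y : ℕ} (h : x ^ 2 + y ^ 2 ≡ 5 [MOD 8]) :
    ∃ p : ℕ, p.Prime ∧ p ≡ 5 [MOD 8] ∧ p ∣ x ^ 2 + y ^ 2 := by
  -- Off a square factor, the odd prime factors of a sum of two squares are `1` modulo `4`; were
  -- none of them `5` modulo `8`, the whole sum would be `1` modulo `8`.
  obtain ⟨a, b, hab, hb⟩ := Nat.eq_sq_add_sq_iff_eq_sq_mul.1 ⟨x, y, rfl⟩
  rw [hab] at h ⊢
  have hodd : Odd (a ^ 2 * b) := Nat.odd_iff.2 (h.of_dvd (by norm_num : 2 ∣ 8))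
  obtain ⟨ha_sq, hb_odd⟩ := Nat.odd_mul.1 hodd
  have ha : a ^ 2 ≡ 1 [MOD 8] := by
    have ha_odd : Odd (a : ℤ) := mod_cast Nat.odd_pow_iff two_ne_zero |>.1 ha_sq
    exact Int.natCast_modEq_iff.1 (mod_cast sq_modEq_one_of_odd ha_odd)
  have hb_five : b ≡ 5 [MOD 8] := by simpa using (ha.symm.mul_right b).trans h
  by_contra! hno
  have hb_one : b ≡ 1 [MOD 8] := modEq_one_of_forall_prime_dvd hb_odd.pos.ne' fun p hp hpb ↦ by
    have hp_five : ¬ p ≡ 5 [MOD 8] := fun h5 ↦ hno p hp h5 (hpb.mul_left _)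
    have hp_odd : p % 2 = 1 := Nat.odd_iff.1 (hb_odd.of_dvd_nat hpb)
    have hp_four : p % 4 ≠ 3 := Nat.mod_four_ne_three_of_mem_primeFactors_of_isSquare_neg_one
      (Nat.mem_primeFactors.2 ⟨hp, hpb, hb_odd.pos.ne'⟩) hb
    unfold Nat.ModEq at *
    omega
  exact absurd (hb_one.symm.trans hb_five) (by decide)

theorem exists_mem_Pset_dvd_sq_add_sq {x y : ℤ} (h : x ^ 2 + y ^ 2 ≡ 5 [ZMOD 8]) :
    ∃ p ∈ Pset, p ∣ x ^ 2 + y ^ 2 := by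
  have hcast : ((x.natAbs ^ 2 + y.natAbs ^ 2 : ℕ) : ℤ) = x ^ 2 + y ^ 2 := by simp
  rw [← hcast] at h ⊢
  obtain ⟨p, hp, hp_five, hp_dvd⟩ :=
    exists_prime_modEq_five_dvd_sq_add_sq (Int.natCast_modEq_iff.1 h)
  exact ⟨p, ⟨Nat.prime_iff_prime_int.1 hp, mod_cast hp.pos,
    (Int.natCast_modEq_iff.2 hp_five).trans (by decide)⟩, Int.natCast_dvd_natCast.2 hp_dvd⟩

theorem D4_eq_mul (x₀ x₁ x₂ x₃ : ℤ) :
    D4 x₀ x₁ x₂ x₃ =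
      ((x₀ + x₂) ^ 2 - (x₁ + x₃) ^ 2) * ((x₀ - x₂) ^ 2 + (x₁ - x₃) ^ 2) := by
  simp [D4, Matrix.det_succ_row_zero, Fin.sum_univ_succ, Fin.succAbove]
  ring

theorem sq_sub_add_sq_sub_dvd_D4 (x₀ x₁ x₂ x₃ : ℤ) :
    (x₀ - x₂) ^ 2 + (x₁ - x₃) ^ 2 ∣ D4 x₀ x₁ x₂ x₃ :=
  D4_eq_mul x₀ x₁ x₂ x₃ ▸ dvd_mul_left _ _

theorem D4_rotate (x₀ x₁ x₂ x₃ : ℤ) : D4 x₁ x₂ x₃ x₀ = -D4 x₀ x₁ x₂ x₃ := by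
  simp only [D4_eq_mul]
  ring

theorem D4_modEq_of_odd_of_even {x₀ x₁ x₂ x₃ : ℤ} (hodd : Odd (x₀ + x₂)) (heven : Even (x₁ + x₃)) :
    D4 x₀ x₁ x₂ x₃ ≡ 1 - 4 * (x₀ * x₂ + x₁ * x₃) [ZMOD 16] := by
  obtain ⟨r, hr⟩ := (sq_modEq_one_of_odd hodd).symm.dvd
  obtain ⟨u, hu⟩ := heven
  set q := x₀ * x₂ + x₁ * x₃ with hq
  have hD : D4 x₀ x₁ x₂ x₃ = (8 * r + 1 - 4 * u ^ 2) * (8 * r + 1 + 4 * u ^ 2 - 4 * q) := by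
    have hsq : (x₀ + x₂) ^ 2 = 8 * r + 1 := by linear_combination hr
    have hdiff : (x₀ - x₂) ^ 2 + (x₁ - x₃) ^ 2 = (x₀ + x₂) ^ 2 + (x₁ + x₃) ^ 2 - 4 * q := by
      rw [hq]
      ring
    rw [D4_eq_mul, hdiff, hsq, hu]
    ring
  rw [hD]
  exact (Int.modEq_iff_dvd.2 ⟨4 * r ^ 2 + r - u ^ 4 - 2 * q * r + q * u ^ 2, by ring⟩).symm

theorem D4_modEq_of_even_of_odd {x₀ x₁ x₂ x₃ : ℤ} (heven : Even (x₀ + x₂)) (hodd : Odd (x₁ + x₃)) :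
    D4 x₀ x₁ x₂ x₃ ≡ -(1 - 4 * (x₀ * x₂ + x₁ * x₃)) [ZMOD 16] := by
  have h := (D4_modEq_of_odd_of_even hodd (add_comm x₀ x₂ ▸ heven)).neg
  rwa [D4_rotate, neg_neg, add_comm (x₁ * x₃), mul_comm x₂] at h

theorem D4_mul_D4_modEq {x₀ x₁ x₂ x₃ y₀ y₁ y₂ y₃ : ℤ} (hx : Odd (x₀ + x₂ + (x₁ + x₃)))
    (h₀₂ : Even (x₀ + x₂) ↔ Even (y₀ + y₂)) (h₁₃ : Even (x₁ + x₃) ↔ Even (y₁ + y₃)) :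
    D4 x₀ x₁ x₂ x₃ * D4 y₀ y₁ y₂ y₃ ≡
      1 - 4 * (x₀ * x₂ + x₁ * x₃ + (y₀ * y₂ + y₁ * y₃)) [ZMOD 16] := by
  have hmul (q r : ℤ) : (1 - 4 * q) * (1 - 4 * r) ≡ 1 - 4 * (q + r) [ZMOD 16] :=
    Int.modEq_iff_dvd.2 ⟨-(q * r), by ring⟩
  rcases Int.even_or_odd (x₀ + x₂) with hA | hA
  · have hC : Odd (x₁ + x₃) := (Int.odd_add'.1 hx).2 hA
    have hC' : Odd (y₁ + y₃) := by rwa [← Int.not_even_iff_odd, ← h₁₃, Int.not_even_iff_odd]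
    refine ((D4_modEq_of_even_of_odd hA hC).mul (D4_modEq_of_even_of_odd (h₀₂.1 hA) hC')).trans ?_
    rw [neg_mul_neg]
    exact hmul _ _
  · have hC : Even (x₁ + x₃) := (Int.odd_add.1 hx).1 hA
    have hA' : Odd (y₀ + y₂) := by rwa [← Int.not_even_iff_odd, ← h₀₂, Int.not_even_iff_odd]
    exact ((D4_modEq_of_odd_of_even hA hC).mul (D4_modEq_of_odd_of_even hA' (h₁₃.1 hC))).trans
      (hmul _ _)

section AddSub

variable {s₀ s₁ s₂ s₃ t₀ t₁ t₂ t₃ : ℤ}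

theorem D4_add_mul_D4_sub_modEq (hodd : Odd (s₀ + t₀ + (s₂ + t₂) + (s₁ + t₁ + (s₃ + t₃)))) :
    D4 (s₀ + t₀) (s₁ + t₁) (s₂ + t₂) (s₃ + t₃) * D4 (s₀ - t₀) (s₁ - t₁) (s₂ - t₂) (s₃ - t₃) ≡
      1 - 8 * (s₀ * s₂ + s₁ * s₃ + (t₀ * t₂ + t₁ * t₃)) [ZMOD 16] := by
  convert D4_mul_D4_modEq hodd (y₀ := s₀ - t₀) (y₁ := s₁ - t₁) (y₂ := s₂ - t₂) (y₃ := s₃ - t₃)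
    (by grind) (by grind) using 1
  ring

theorem exists_mem_Pset_dvd_D4_add_mul_D4_sub
    (hodd : Odd (s₀ + t₀ + (s₂ + t₂) + (s₁ + t₁ + (s₃ + t₃))))
    (hst : Odd ((s₀ + s₂) * (s₁ + s₃) + (t₀ + t₂) * (t₁ + t₃))) :
    ∃ p ∈ Pset, p ∣ D4 (s₀ + t₀) (s₁ + t₁) (s₂ + t₂) (s₃ + t₃) *
      D4 (s₀ - t₀) (s₁ - t₁) (s₂ - t₂) (s₃ - t₃) := by
  have hodd' : Odd (s₀ - s₂ + (t₀ - t₂) + (s₁ - s₃ + (t₁ - t₃))) := by grind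
  have hst' : Odd ((s₀ - s₂) * (s₁ - s₃) + (t₀ - t₂) * (t₁ - t₃)) := by grind
  rcases sq_add_sq_modEq_five_or hodd' hst' with h | h
  · rw [← add_sub_add_comm, ← add_sub_add_comm] at h
    obtain ⟨p, hp, hdvd⟩ := exists_mem_Pset_dvd_sq_add_sq h
    exact ⟨p, hp, (hdvd.trans (sq_sub_add_sq_sub_dvd_D4 ..)).mul_right _⟩
  · rw [sub_sub_sub_comm, sub_sub_sub_comm s₁] at h
    obtain ⟨p, hp, hdvd⟩ := exists_mem_Pset_dvd_sq_add_sq h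
    exact ⟨p, hp, (hdvd.trans (sq_sub_add_sq_sub_dvd_D4 ..)).mul_left _⟩

end AddSub

theorem modEq_neg_three_of_mul_modEq_one {p r : ℤ} (hp : p ≡ -3 [ZMOD 8])
    (hpr : p * r ≡ 1 [ZMOD 8]) : r ≡ -3 [ZMOD 8] :=
  calc r ≡ -3 * (-3 * r) [ZMOD 8] := Int.modEq_iff_dvd.2 ⟨r, by ring⟩
    _ ≡ -3 * (p * r) [ZMOD 8] := (hp.symm.mul_right r).mul_left _
    _ ≡ -3 [ZMOD 8] := hpr.mul_left _

theorem exists_eq_mul_of_mem_Pset_of_dvd {N p m : ℤ} (hp : p ∈ Pset) (hpN : p ∣ N)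
    (hN : N ≡ 1 - 8 * m [ZMOD 16]) :
    ∃ k l : ℤ, 8 * l - 3 ∈ Pset ∧ (Odd (k + l) ↔ Even m) ∧ N = (8 * k - 3) * (8 * l - 3) := by
  obtain ⟨r, rfl⟩ := hpN
  have hN_one : p * r ≡ 1 [ZMOD 8] :=
    (hN.of_dvd (by norm_num)).trans (Int.modEq_iff_dvd.2 ⟨m, by ring⟩)
  obtain ⟨l, hl⟩ := hp.2.2.symm.dvd
  obtain ⟨k, hk⟩ := (modEq_neg_three_of_mul_modEq_one hp.2.2 hN_one).symm.dvd
  obtain rfl : p = 8 * l - 3 := by linarith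
  obtain rfl : r = 8 * k - 3 := by linarith
  refine ⟨k, l, hp, ?_, mul_comm _ _⟩
  have hexpand : (8 * l - 3) * (8 * k - 3) = 64 * (k * l) - 24 * (k + l) + 9 := by ring
  rw [hexpand] at hN
  unfold Int.ModEq at hN
  grind

theorem normSq_sq_sub_sq (u v : ℂ) :
    normSq (u ^ 2 - v ^ 2) = (normSq u + normSq v) ^ 2 - 4 * (u * starRingEnd ℂ v).re ^ 2 := by
  simp only [normSq_apply, sq, sub_re, sub_im, mul_re, mul_im, conj_re, conj_im]
  ring

theorem betaD_mul_conj (d : ℕ → ℤ) :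
    betaD d * starRingEnd ℂ (betaD d) =
      (((d 0 + d 2) ^ 2 + (d 4 + d 6) ^ 2 + ((d 1 + d 3) ^ 2 + (d 5 + d 7) ^ 2)) ^ 2 -
        4 * ((d 0 + d 2) * (d 1 + d 3) + (d 4 + d 6) * (d 5 + d 7)) ^ 2 : ℤ) := by
  rw [mul_conj, betaD, normSq_sq_sub_sq, ← ofReal_intCast]
  congr 1
  simp only [alphaD, normSq_apply, add_re, add_im, mul_re, mul_im, conj_re, conj_im, intCast_re,
    intCast_im, I_re, I_im]
  push_cast
  ring

theorem odd_of_sq_sub_four_mul_sq_modEq {s t : ℤ} (h : s ^ 2 - 4 * t ^ 2 ≡ -3 [ZMOD 8]) :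
    Odd t := by
  by_contra ht
  obtain ⟨u, rfl⟩ := Int.not_odd_iff_even.1 ht
  have hs : s ^ 2 ≡ -3 [ZMOD 8] :=
    (Int.modEq_iff_dvd.2 ⟨-(2 * u ^ 2), by ring⟩ : s ^ 2 ≡ s ^ 2 - 4 * (u + u) ^ 2 [ZMOD 8]).trans h
  have hs' : (s : ZMod 8) ^ 2 = -3 := mod_cast (ZMod.intCast_eq_intCast_iff _ _ 8).2 hs
  exact (by decide : ∀ z : ZMod 8, z ^ 2 ≠ -3) s hs'

theorem stmt11_general (a : ℕ → ℤ) (B : ℤ)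
    (hB : (B : ℂ) = betaD (dd a) * (starRingEnd ℂ) (betaD (dd a)))
    (h1 : ¬ (bI a 0 + bI a 2 ≡ bI a 1 + bI a 3 [ZMOD 2]))
    (h3 : B ≡ -3 [ZMOD 8]) :
    ∃ k l : ℤ, 8 * l - 3 ∈ Pset ∧
      (Odd (k + l) ↔
        bI a 0 * bI a 2 + bI a 1 * bI a 3 + (cI a 0 * cI a 2 + cI a 1 * cI a 3) ≡ 0 [ZMOD 4]) ∧
      D4 (bI a 0) (bI a 1) (bI a 2) (bI a 3) * D4 (cI a 0) (cI a 1) (cI a 2) (cI a 3) =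
        (8 * k - 3) * (8 * l - 3) := by
  have hodd : Odd (bI a 0 + bI a 2 + (bI a 1 + bI a 3)) := by grind [Int.ModEq]
  have hβ : Odd ((dd a 0 + dd a 2) * (dd a 1 + dd a 3) +
      (dd a 4 + dd a 6) * (dd a 5 + dd a 7)) := by
    rw [betaD_mul_conj, Int.cast_inj] at hB
    exact odd_of_sq_sub_four_mul_sq_modEq (hB ▸ h3)
  have hst : Odd ((a 0 + a 8 + (a 2 + a 10)) * (a 1 + a 9 + (a 3 + a 11)) +
      (a 4 + a 12 + (a 6 + a 14)) * (a 5 + a 13 + (a 7 + a 15))) := by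
    simpa only [dd, Int.odd_add, Int.odd_sub, Int.odd_mul, ← Int.not_odd_iff_even] using hβ
  obtain ⟨p, hp, hdvd⟩ := exists_mem_Pset_dvd_D4_add_mul_D4_sub hodd hst
  obtain ⟨k, l, hl, hkl, hD⟩ :=
    exists_eq_mul_of_mem_Pset_of_dvd hp hdvd (D4_add_mul_D4_sub_modEq hodd)
  refine ⟨k, l, hl, hkl.trans ?_, hD⟩
  simp only [bI, cI]
  grind [Int.ModEq]

theorem stmt11 (a : ℕ → ℤ) (B : ℤ)
    (hB : (B : ℂ) = betaD (dd a) * (starRingEnd ℂ) (betaD (dd a)))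
    (h1 : ¬ (bI a 0 + bI a 2 ≡ bI a 1 + bI a 3 [ZMOD 2]))
    (h2 : bI a 0 * bI a 2 + bI a 1 * bI a 3 ≡ 0 [ZMOD 2])
    (h3 : B ≡ -3 [ZMOD 8]) :
    ((bI a 0 * bI a 2 + bI a 1 * bI a 3 ≡ cI a 0 * cI a 2 + cI a 1 * cI a 3 [ZMOD 4]) →
      ∃ j k l : ℤ, (8 * l - 3) ∈ Pset ∧ ¬ (j ≡ k + l [ZMOD 2]) ∧
        D4 (bI a 0) (bI a 1) (bI a 2) (bI a 3) * D4 (cI a 0) (cI a 1) (cI a 2) (cI a 3) =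
          (8 * j + 1) * (8 * k - 3) * (8 * l - 3)) ∧
    ((¬ (bI a 0 * bI a 2 + bI a 1 * bI a 3 ≡ cI a 0 * cI a 2 + cI a 1 * cI a 3 [ZMOD 4])) →
      ∃ j k l : ℤ, (8 * l - 3) ∈ Pset ∧ j ≡ k + l [ZMOD 2] ∧
        D4 (bI a 0) (bI a 1) (bI a 2) (bI a 3) * D4 (cI a 0) (cI a 1) (cI a 2) (cI a 3) =
          (8 * j + 1) * (8 * k - 3) * (8 * l - 3)) := by
  obtain ⟨k, l, hl, hkl, hD⟩ := stmt11_general a B hB h1 h3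
  constructor <;> exact fun h ↦ ⟨0, k, l, hl, by grind [Int.ModEq], by rw [hD]; ring⟩
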